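/- Let Ω satisfy Assumption 1. Let ω be a C¹ divergence-free vector field on Ω̄, periodic in q₁ and q₂, with ω̂₁ = ω̂₂ = 0 on the boundary surfaces q₃ = ρ₀ and q₃ = ρ₁. Then for l = 0,1, (2l−1) ∫_{∂Ω^l} (n·∇)ω · ω dS = −∫₀¹∫₀¹ [∂_{q₃}(H₁H₂) H₃⁻¹ ω̂₃²]|_{q₃=ρ_l} dq₁ dq₂, where ∂Ω^l = {q₃ = ρ_l} and n is the outward unit normal of Ω. -/

import Mathlib

open MeasureTheory Set Filter Bornology
open scoped ENNReal NNReal Topology RealInnerProductSpace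

noncomputable section

/-- Euclidean 3-space. -/
abbrev E3 : Type := EuclideanSpace ℝ (Fin 3)

/-- The vector of `E3` with the given three coordinates. -/
def v3 (a b c : ℝ) : E3 := (WithLp.equiv 2 (Fin 3 → ℝ)).symm ![a, b, c]

/-- Partial derivative in the `i`-th coordinate direction of a vector field. -/
def pdv (i : Fin 3) (f : E3 → E3) (x : E3) : E3 := fderiv ℝ f x (EuclideanSpace.single i 1)

/-- Partial derivative in the `i`-th coordinate direction of a scalar field. -/
def pds (i : Fin 3) (f : E3 → ℝ) (x : E3) : ℝ := fderiv ℝ f x (EuclideanSpace.single i 1)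

/-- Divergence `∇·u` of a vector field on `ℝ³`. -/
def div3 (u : E3 → E3) (x : E3) : ℝ := ∑ i, pdv i u x i

/-- Curl (vorticity) `∇×u` of a vector field on `ℝ³`. -/
def curl3 (u : E3 → E3) (x : E3) : E3 :=
  v3 (pdv 1 u x 2 - pdv 2 u x 1) (pdv 2 u x 0 - pdv 0 u x 2) (pdv 0 u x 1 - pdv 1 u x 0)

/-- Cross product on `ℝ³`. -/
def cross3 (a b : E3) : E3 :=
  v3 (a 1 * b 2 - a 2 * b 1) (a 2 * b 0 - a 0 * b 2) (a 0 * b 1 - a 1 * b 0)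

/-- The shear (rate-of-strain) tensor `D(u) = (∇u + (∇u)ᵀ)/2` applied to a vector `v`. -/
def Dapply (u : E3 → E3) (x v : E3) : E3 :=
  (WithLp.equiv 2 (Fin 3 → ℝ)).symm
    (fun j => (1 / 2) * ∑ i, (pdv i u x j + pdv j u x i) * v i)

/-- Assumption 1 of the paper: an orthogonal curvilinear coordinate system
`x = Φ(q)` taking `Ω` onto `Ω̂ = {0 ≤ q₁ < 1, 0 ≤ q₂ < 1, ρ₀ ≤ q₃ ≤ ρ₁}`,
periodic (with period 1) in `q₁` and `q₂`, with the `q₃`-direction the outward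
normal on the boundary component `{q₃ = ρ₁}` and the inward normal on `{q₃ = ρ₀}`. -/
structure CurvCoord (Ω : Set E3) (ρ₀ ρ₁ : ℝ) : Type where
  /-- the coordinate map, `x = Φ q` -/
  Φ : E3 → E3
  ρ₀_pos : 0 < ρ₀
  ρ₀_lt_ρ₁ : ρ₀ < ρ₁
  smooth : ContDiff ℝ (⊤ : ℕ∞) Φ
  periodic₁ : ∀ q : E3, Φ (q + EuclideanSpace.single 0 1) = Φ q
  periodic₂ : ∀ q : E3, Φ (q + EuclideanSpace.single 1 1) = Φ q
  orth : ∀ q : E3, ∀ i j : Fin 3, i ≠ j → ⟪pdv i Φ q, pdv j Φ q⟫ = 0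
  nondeg : ∀ q : E3, ∀ i : Fin 3, pdv i Φ q ≠ 0
  image_eq :
    Φ '' {q : E3 | q 0 ∈ Ico (0 : ℝ) 1 ∧ q 1 ∈ Ico (0 : ℝ) 1 ∧ q 2 ∈ Icc ρ₀ ρ₁} = closure Ω
  injOn : InjOn Φ {q : E3 | q 0 ∈ Ico (0 : ℝ) 1 ∧ q 1 ∈ Ico (0 : ℝ) 1 ∧ q 2 ∈ Icc ρ₀ ρ₁}
  interior_mem : ∀ q : E3, q 2 ∈ Ioo ρ₀ ρ₁ → Φ q ∈ Ω
  q₃_outward : ∀ q : E3, q 2 = ρ₁ →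
    ∀ᶠ t in 𝓝[>] (0 : ℝ), Φ q + t • (‖pdv 2 Φ q‖⁻¹ • pdv 2 Φ q) ∉ closure Ω
  q₃_inward : ∀ q : E3, q 2 = ρ₀ →
    ∀ᶠ t in 𝓝[>] (0 : ℝ), Φ q - t • (‖pdv 2 Φ q‖⁻¹ • pdv 2 Φ q) ∉ closure Ω

/-- Lamé coefficient `H_i(q) = |∂x/∂q_i|`. -/
def lame (Φ : E3 → E3) (i : Fin 3) (q : E3) : ℝ := ‖pdv i Φ q‖

/-- Orthonormal frame vector `ê_i = H_i⁻¹ ∂x/∂q_i`. -/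
def uvec (Φ : E3 → E3) (i : Fin 3) (q : E3) : E3 := (lame Φ i q)⁻¹ • pdv i Φ q

/-- Frame component `v̂_i(q) = v(Φ(q)) · ê_i(q)` of a vector field `v` in the
curvilinear coordinates. -/
def fc (Φ : E3 → E3) (v : E3 → E3) (i : Fin 3) (q : E3) : ℝ := ⟪v (Φ q), uvec Φ i q⟫

/-- The coordinate box `Ω̂`. -/
def Qset (ρ₀ ρ₁ : ℝ) : Set E3 :=
  {q : E3 | q 0 ∈ Icc (0 : ℝ) 1 ∧ q 1 ∈ Icc (0 : ℝ) 1 ∧ q 2 ∈ Icc ρ₀ ρ₁}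

/-- Value `ρ_l` of the coordinate `q₃` on the boundary component `∂Ω^l`, `l = 0, 1`. -/
def bval (ρ₀ ρ₁ : ℝ) (l : Fin 2) : ℝ := if l = 0 then ρ₀ else ρ₁

/-!
On the surface `q₃ = ρ` the field is normal, `ω ∘ Φ = c ∂₃Φ`. Since `⟪ω ∘ Φ, ∂ᵢΦ⟫` vanishes along
the surface for `i = 1, 2`, differentiating it in the direction `i` and using orthogonality and
symmetry of second derivatives gives `⟪∂ᵢΦ, ∂ᵢ(ω ∘ Φ)⟫ = c Hᵢ ∂₃Hᵢ`. These are, up to the factor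
`Hᵢ²`, the tangential terms of `div ω` in the frame `ê`, so `div ω = 0` determines the normal term
`⟪∂₃Φ, ∂₃(ω ∘ Φ)⟫`, and `∂₃(|ω ∘ Φ|² / 2)` is `c` times that. The integrands agree pointwise.
-/

section Derivatives

lemma norm_mul_fderiv_norm_apply {E F : Type*} [NormedAddCommGroup E] [NormedSpace ℝ E]
    [NormedAddCommGroup F] [InnerProductSpace ℝ F] {f : E → F} {x : E}
    (hf : DifferentiableAt ℝ f x) (hx : f x ≠ 0) (v : E) :
    ‖f x‖ * fderiv ℝ (fun y => ‖f y‖) x v = ⟪f x, fderiv ℝ f x v⟫ := by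
  have hnorm : DifferentiableAt ℝ (fun y => ‖f y‖) x := hf.norm ℝ hx
  have hsq := (hnorm.hasFDerivAt.pow 2).unique hf.hasFDerivAt.norm_sq
  simpa [mul_assoc] using DFunLike.congr_fun hsq v

variable {f Φ : E3 → E3} {q : E3}

lemma pdv_comp (hf : DifferentiableAt ℝ f (Φ q)) (hΦ : DifferentiableAt ℝ Φ q) (i : Fin 3) :
    pdv i (fun p => f (Φ p)) q = fderiv ℝ f (Φ q) (pdv i Φ q) :=
  DFunLike.congr_fun (fderiv_comp q hf hΦ) _

lemma differentiableAt_pdv_of_contDiffAt (hΦ : ContDiffAt ℝ 2 Φ q) (i : Fin 3) :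
    DifferentiableAt ℝ (pdv i Φ) q :=
  ((hΦ.fderiv_right (m := 1) (by norm_num)).differentiableAt one_ne_zero).clm_apply
    (differentiableAt_const _)

lemma pdv_pdv_comm (hΦ : ContDiffAt ℝ 2 Φ q) (i j : Fin 3) :
    pdv i (pdv j Φ) q = pdv j (pdv i Φ) q := by
  have hd : DifferentiableAt ℝ (fderiv ℝ Φ) q :=
    (hΦ.fderiv_right (m := 1) (by norm_num)).differentiableAt one_ne_zero
  have pdv_pdv (i j : Fin 3) : pdv i (pdv j Φ) q =
      fderiv ℝ (fderiv ℝ Φ) q (EuclideanSpace.single i 1) (EuclideanSpace.single j 1) := by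
    change fderiv ℝ (fun p => fderiv ℝ Φ p (EuclideanSpace.single j 1)) q _ = _
    simp [fderiv_clm_apply hd (differentiableAt_const _)]
  rw [pdv_pdv, pdv_pdv]
  exact hΦ.isSymmSndFDerivAt (by simp) _ _

lemma pds_eq_zero_of_forall_coord_eq {g : E3 → ℝ} {i k : Fin 3} (hg : DifferentiableAt ℝ g q)
    (hik : i ≠ k) (hzero : ∀ p : E3, p k = q k → g p = 0) : pds i g q = 0 := by
  have hline (t : ℝ) : g (q + t • EuclideanSpace.single i 1) = 0 := hzero _ (by simp [hik.symm])
  rw [pds, ← hg.lineDeriv_eq_fderiv]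
  simp [lineDeriv, hline]

lemma div3_eq_sum_inner {ι : Type*} [Fintype ι] (b : OrthonormalBasis ι ℝ E3) (u : E3 → E3)
    (x : E3) : div3 u x = ∑ i, ⟪b i, fderiv ℝ u x (b i)⟫ := by
  calc div3 u x = LinearMap.trace ℝ E3 (fderiv ℝ u x).toLinearMap := by
        simp [LinearMap.trace_eq_sum_inner _ (EuclideanSpace.basisFun (Fin 3) ℝ), div3, pdv,
          EuclideanSpace.inner_single_left]
    _ = ∑ i, ⟪b i, fderiv ℝ u x (b i)⟫ := LinearMap.trace_eq_sum_inner _ b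

end Derivatives

/-- The differential conditions on an orthogonal curvilinear coordinate map: it is `C²`, with
nonzero, pairwise orthogonal coordinate vectors. Neither injectivity nor periodicity is asked for,
and no domain is singled out. -/
structure IsOrthogonalCoord (Φ : E3 → E3) : Prop where
  contDiff : ContDiff ℝ 2 Φ
  inner_pdv_eq_zero : ∀ q : E3, ∀ i j : Fin 3, i ≠ j → ⟪pdv i Φ q, pdv j Φ q⟫ = 0
  pdv_ne_zero : ∀ q : E3, ∀ i : Fin 3, pdv i Φ q ≠ 0

namespace IsOrthogonalCoord

variable {Φ ω : E3 → E3} {q : E3} {i k : Fin 3}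

lemma differentiableAt (hΦ : IsOrthogonalCoord Φ) (q : E3) : DifferentiableAt ℝ Φ q :=
  hΦ.contDiff.differentiable two_ne_zero q

lemma differentiableAt_pdv (hΦ : IsOrthogonalCoord Φ) (i : Fin 3) (q : E3) :
    DifferentiableAt ℝ (pdv i Φ) q :=
  differentiableAt_pdv_of_contDiffAt hΦ.contDiff.contDiffAt i

lemma lame_pos (hΦ : IsOrthogonalCoord Φ) (i : Fin 3) (q : E3) : 0 < lame Φ i q :=
  norm_pos_iff.mpr (hΦ.pdv_ne_zero q i)

lemma lame_ne_zero (hΦ : IsOrthogonalCoord Φ) (i : Fin 3) (q : E3) : lame Φ i q ≠ 0 :=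
  (hΦ.lame_pos i q).ne'

lemma differentiableAt_lame (hΦ : IsOrthogonalCoord Φ) (i : Fin 3) (q : E3) :
    DifferentiableAt ℝ (lame Φ i) q :=
  (hΦ.differentiableAt_pdv i q).norm ℝ (hΦ.pdv_ne_zero q i)

lemma fc_mul_lame (hΦ : IsOrthogonalCoord Φ) (v : E3 → E3) (i : Fin 3) (q : E3) :
    fc Φ v i q * lame Φ i q = ⟪v (Φ q), pdv i Φ q⟫ := by
  rw [fc, uvec, inner_smul_right]
  field_simp [hΦ.lame_ne_zero i q]

lemma orthonormal_uvec (hΦ : IsOrthogonalCoord Φ) (q : E3) :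
    Orthonormal ℝ fun i => uvec Φ i q := by
  refine ⟨fun i => ?_, fun i j hij => ?_⟩
  · exact norm_smul_inv_norm (𝕜 := ℝ) (hΦ.pdv_ne_zero q i)
  · simp [uvec, inner_smul_left, inner_smul_right, hΦ.inner_pdv_eq_zero q i j hij]

/-- The orthonormal basis `ê₁, ê₂, ê₃` of `ℝ³` attached to the point with coordinates `q`. -/
def frame (hΦ : IsOrthogonalCoord Φ) (q : E3) : OrthonormalBasis (Fin 3) ℝ E3 :=
  (basisOfOrthonormalOfCardEqFinrank (hΦ.orthonormal_uvec q) (by simp)).toOrthonormalBasis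
    (by simpa using hΦ.orthonormal_uvec q)

@[simp]
lemma frame_apply (hΦ : IsOrthogonalCoord Φ) (q : E3) (i : Fin 3) :
    hΦ.frame q i = uvec Φ i q := by
  simp [frame]

lemma sum_fc_sq (hΦ : IsOrthogonalCoord Φ) (v : E3 → E3) (q : E3) :
    ∑ i, fc Φ v i q ^ 2 = ‖v (Φ q)‖ ^ 2 := by
  simp [← (hΦ.frame q).sum_sq_norm_inner_left (v (Φ q)), fc]

lemma sum_fc_smul_uvec (hΦ : IsOrthogonalCoord Φ) (v : E3 → E3) (q : E3) :
    ∑ i, fc Φ v i q • uvec Φ i q = v (Φ q) := by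
  simpa [fc, real_inner_comm] using (hΦ.frame q).sum_repr' (v (Φ q))

lemma eq_smul_pdv_of_fc_eq_zero (hΦ : IsOrthogonalCoord Φ)
    (hω : ∀ i, i ≠ k → fc Φ ω i q = 0) :
    ω (Φ q) = (fc Φ ω k q / lame Φ k q) • pdv k Φ q := by
  rw [← hΦ.sum_fc_smul_uvec ω q, Finset.sum_eq_single k (fun i _ hi => by simp [hω i hi]) (by simp),
    uvec, smul_smul, div_eq_mul_inv]

lemma div3_apply (hΦ : IsOrthogonalCoord Φ) (hω : DifferentiableAt ℝ ω (Φ q)) :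
    div3 ω (Φ q) =
      ∑ i, ⟪pdv i Φ q, pdv i (fun p => ω (Φ p)) q⟫ / lame Φ i q ^ 2 := by
  rw [div3_eq_sum_inner (hΦ.frame q)]
  refine Finset.sum_congr rfl fun i _ => ?_
  rw [frame_apply, uvec, map_smul, inner_smul_left, inner_smul_right,
    pdv_comp hω (hΦ.differentiableAt q), conj_trivial]
  field_simp

lemma lame_mul_pds_lame (hΦ : IsOrthogonalCoord Φ) (i k : Fin 3) (q : E3) :
    lame Φ i q * pds k (lame Φ i) q = ⟪pdv i Φ q, pdv k (pdv i Φ) q⟫ :=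
  norm_mul_fderiv_norm_apply (hΦ.differentiableAt_pdv i q) (hΦ.pdv_ne_zero q i) _

lemma inner_pdv_pdv_pdv_self (hΦ : IsOrthogonalCoord Φ) (hik : i ≠ k) (q : E3) :
    ⟪pdv k Φ q, pdv i (pdv i Φ) q⟫ = -(lame Φ i q * pds k (lame Φ i) q) := by
  have horth : pds i (fun p => ⟪pdv k Φ p, pdv i Φ p⟫) q = 0 := by
    simp [pds, hΦ.inner_pdv_eq_zero _ k i hik.symm]
  have hleibniz : pds i (fun p => ⟪pdv k Φ p, pdv i Φ p⟫) q =
      ⟪pdv k Φ q, pdv i (pdv i Φ) q⟫ + ⟪pdv i (pdv k Φ) q, pdv i Φ q⟫ :=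
    fderiv_inner_apply ℝ (hΦ.differentiableAt_pdv k q) (hΦ.differentiableAt_pdv i q) _
  rw [hΦ.lame_mul_pds_lame, pdv_pdv_comm hΦ.contDiff.contDiffAt k i,
    real_inner_comm (pdv i (pdv k Φ) q)]
  linarith

lemma inner_pdv_pdv_comp_of_tangential_fc_eq_zero (hΦ : IsOrthogonalCoord Φ)
    (hω : DifferentiableAt ℝ ω (Φ q)) (hik : i ≠ k)
    (hzero : ∀ p : E3, p k = q k → fc Φ ω i p = 0) {c : ℝ} (hc : ω (Φ q) = c • pdv k Φ q) :
    ⟪pdv i Φ q, pdv i (fun p => ω (Φ p)) q⟫ = c * (lame Φ i q * pds k (lame Φ i) q) := by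
  have hωΦ : DifferentiableAt ℝ (fun p => ω (Φ p)) q := hω.comp q (hΦ.differentiableAt q)
  have hX := hΦ.differentiableAt_pdv i q
  have htangent : pds i (fun p => ⟪ω (Φ p), pdv i Φ p⟫) q = 0 :=
    pds_eq_zero_of_forall_coord_eq (hωΦ.inner ℝ hX) hik fun p hp => by
      rw [← hΦ.fc_mul_lame, hzero p hp, zero_mul]
  have hleibniz : pds i (fun p => ⟪ω (Φ p), pdv i Φ p⟫) q =
      ⟪ω (Φ q), pdv i (pdv i Φ) q⟫ + ⟪pdv i (fun p => ω (Φ p)) q, pdv i Φ q⟫ :=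
    fderiv_inner_apply ℝ hωΦ hX _
  rw [hc, real_inner_smul_left, hΦ.inner_pdv_pdv_pdv_self hik] at hleibniz
  rw [real_inner_comm]
  linarith

lemma pds_half_sum_fc_sq (hΦ : IsOrthogonalCoord Φ) (hω : DifferentiableAt ℝ ω (Φ q))
    (k : Fin 3) :
    pds k (fun p => (∑ i, fc Φ ω i p ^ 2) / 2) q =
      ⟪ω (Φ q), pdv k (fun p => ω (Φ p)) q⟫ := by
  have hωΦ : DifferentiableAt ℝ (fun p => ω (Φ p)) q := hω.comp q (hΦ.differentiableAt q)
  simp only [hΦ.sum_fc_sq, pds, div_eq_inv_mul]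
  rw [(hωΦ.hasFDerivAt.norm_sq.const_mul 2⁻¹).fderiv]
  simp [pdv]

lemma pds_lame_mul_lame (hΦ : IsOrthogonalCoord Φ) (i j k : Fin 3) (q : E3) :
    pds k (fun p => lame Φ i p * lame Φ j p) q =
      lame Φ i q * pds k (lame Φ j) q + lame Φ j q * pds k (lame Φ i) q :=
  DFunLike.congr_fun
    (fderiv_fun_mul (hΦ.differentiableAt_lame i q) (hΦ.differentiableAt_lame j q)) _

lemma pds_half_sum_fc_sq_mul_lame (hΦ : IsOrthogonalCoord Φ)
    (hω : DifferentiableAt ℝ ω (Φ q)) (hdiv : div3 ω (Φ q) = 0)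
    (hbc : ∀ p : E3, p 2 = q 2 → fc Φ ω 0 p = 0 ∧ fc Φ ω 1 p = 0) :
    pds 2 (fun p => (∑ i, fc Φ ω i p ^ 2) / 2) q * (lame Φ 0 q * lame Φ 1 q) =
      -(pds 2 (fun p => lame Φ 0 p * lame Φ 1 p) q * fc Φ ω 2 q ^ 2) := by
  have hzero (i : Fin 3) (hi : i ≠ 2) (p : E3) (hp : p 2 = q 2) : fc Φ ω i p = 0 := by
    fin_cases i
    exacts [(hbc p hp).1, (hbc p hp).2, absurd rfl hi]
  have hnormal : ω (Φ q) = (fc Φ ω 2 q / lame Φ 2 q) • pdv 2 Φ q :=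
    hΦ.eq_smul_pdv_of_fc_eq_zero fun i hi => hzero i hi q rfl
  have htangential (i : Fin 3) (hi : i ≠ 2) :=
    hΦ.inner_pdv_pdv_comp_of_tangential_fc_eq_zero hω hi (hzero i hi) hnormal
  rw [hΦ.div3_apply hω, Fin.sum_univ_three, htangential 0 (by decide),
    htangential 1 (by decide)] at hdiv
  rw [hΦ.pds_half_sum_fc_sq hω, hΦ.pds_lame_mul_lame, hnormal, real_inner_smul_left]
  have hH₀ := hΦ.lame_ne_zero 0 q
  have hH₁ := hΦ.lame_ne_zero 1 q
  have hH₂ := hΦ.lame_ne_zero 2 q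
  field_simp at hdiv ⊢
  linear_combination fc Φ ω 2 q * hdiv

end IsOrthogonalCoord

lemma CurvCoord.isOrthogonalCoord {Ω : Set E3} {ρ₀ ρ₁ : ℝ} (𝒞 : CurvCoord Ω ρ₀ ρ₁) :
    IsOrthogonalCoord 𝒞.Φ where
  contDiff := 𝒞.smooth.of_le (by norm_cast)
  inner_pdv_eq_zero := 𝒞.orth
  pdv_ne_zero := 𝒞.nondeg

lemma CurvCoord.Φ_mem_closure {Ω : Set E3} {ρ₀ ρ₁ : ℝ} (𝒞 : CurvCoord Ω ρ₀ ρ₁) {q : E3}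
    (hq : q 2 ∈ Icc ρ₀ ρ₁) : 𝒞.Φ q ∈ closure Ω := by
  have hcont : Continuous fun t : ℝ => 𝒞.Φ (q + (t - q 2) • EuclideanSpace.single 2 1) :=
    𝒞.smooth.continuous.comp (by fun_prop)
  rw [← closure_Ioo 𝒞.ρ₀_lt_ρ₁.ne] at hq
  simpa using map_mem_closure hcont hq fun t ht => 𝒞.interior_mem _ (by simpa using ht)

lemma bval_eq_or_eq (ρ₀ ρ₁ : ℝ) (l : Fin 2) : bval ρ₀ ρ₁ l = ρ₀ ∨ bval ρ₀ ρ₁ l = ρ₁ :=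
  ite_eq_or_eq _ _ _

lemma bval_mem_Icc {ρ₀ ρ₁ : ℝ} (h : ρ₀ ≤ ρ₁) (l : Fin 2) : bval ρ₀ ρ₁ l ∈ Icc ρ₀ ρ₁ := by
  rcases bval_eq_or_eq ρ₀ ρ₁ l with hl | hl <;> simp [hl, h]

-- `σ = ±1` is the sign for which `n = σ ê₃`, that is `n·∇ = σ H₃⁻¹ ∂_{q₃}`.
theorem boundary_normal_derivative_vorticity_integral_general {Φ ω : E3 → E3} {ρ σ : ℝ}
    (hΦ : IsOrthogonalCoord Φ) (hω : ∀ q : E3, q 2 = ρ → DifferentiableAt ℝ ω (Φ q))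
    (hdiv : ∀ q : E3, q 2 = ρ → div3 ω (Φ q) = 0)
    (hbc : ∀ q : E3, q 2 = ρ → fc Φ ω 0 q = 0 ∧ fc Φ ω 1 q = 0) (hσ : σ ^ 2 = 1) :
    σ * (∫ a in Icc (0 : ℝ) 1, ∫ b in Icc (0 : ℝ) 1,
        (σ * (lame Φ 2 (v3 a b ρ))⁻¹ * pds 2 (fun q => (∑ i, fc Φ ω i q ^ 2) / 2) (v3 a b ρ))
          * (lame Φ 0 (v3 a b ρ) * lame Φ 1 (v3 a b ρ))) =
      -∫ a in Icc (0 : ℝ) 1, ∫ b in Icc (0 : ℝ) 1,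
        pds 2 (fun q => lame Φ 0 q * lame Φ 1 q) (v3 a b ρ) * (lame Φ 2 (v3 a b ρ))⁻¹
          * fc Φ ω 2 (v3 a b ρ) ^ 2 := by
  simp only [← integral_const_mul, ← integral_neg]
  refine integral_congr_ae (.of_forall fun a => integral_congr_ae (.of_forall fun b => ?_))
  beta_reduce
  have hq : v3 a b ρ 2 = ρ := rfl
  have hpointwise := hΦ.pds_half_sum_fc_sq_mul_lame (hω _ hq) (hdiv _ hq)
    fun p hp => hbc p (hp.trans hq)
  generalize v3 a b ρ = q at hpointwise ⊢
  linear_combination (lame Φ 2 q)⁻¹ * hpointwise + (lame Φ 2 q)⁻¹ *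
    pds 2 (fun q => (∑ i, fc Φ ω i q ^ 2) / 2) q * (lame Φ 0 q * lame Φ 1 q) * hσ

-- CURV
/-- For a `C¹` divergence-free field `ω` on `Ω̄` whose tangential
frame components vanish on the boundary surfaces `q₃ = ρ₀, ρ₁`, one has
`(2l−1) ∫_{∂Ω^l} (n·∇)ω · ω dS = −∫₀¹∫₀¹ ∂_{q₃}(H₁H₂) H₃⁻¹ ω̂₃² |_{q₃=ρ_l} dq₁ dq₂`,
where on `∂Ω^l` the surface element is `dS = H₁H₂ dq₁dq₂` and
`n·∇ = (2l−1) H₃⁻¹ ∂_{q₃}`, so that `(n·∇)ω · ω = (2l−1) H₃⁻¹ ∂_{q₃}(|ω̂|²/2)`. -/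
theorem boundary_normal_derivative_vorticity_integral
    (Ω : Set E3) (ρ₀ ρ₁ : ℝ) (𝒞 : CurvCoord Ω ρ₀ ρ₁)
    (ω : E3 → E3) (hω : ContDiff ℝ 1 ω)
    (hdiv : ∀ x ∈ closure Ω, div3 ω x = 0)
    (hbc : ∀ q : E3, (q 2 = ρ₀ ∨ q 2 = ρ₁) → fc 𝒞.Φ ω 0 q = 0 ∧ fc 𝒞.Φ ω 1 q = 0)
    (l : Fin 2) :
    (2 * (l : ℕ) - 1 : ℝ) *
      (∫ a in Icc (0 : ℝ) 1, ∫ b in Icc (0 : ℝ) 1,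
        ((2 * (l : ℕ) - 1 : ℝ) * (lame 𝒞.Φ 2 (v3 a b (bval ρ₀ ρ₁ l)))⁻¹
            * pds 2 (fun q => (∑ i : Fin 3, fc 𝒞.Φ ω i q ^ 2) / 2) (v3 a b (bval ρ₀ ρ₁ l)))
          * (lame 𝒞.Φ 0 (v3 a b (bval ρ₀ ρ₁ l)) * lame 𝒞.Φ 1 (v3 a b (bval ρ₀ ρ₁ l)))) =
    - ∫ a in Icc (0 : ℝ) 1, ∫ b in Icc (0 : ℝ) 1,
        pds 2 (fun q => lame 𝒞.Φ 0 q * lame 𝒞.Φ 1 q) (v3 a b (bval ρ₀ ρ₁ l))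
          * (lame 𝒞.Φ 2 (v3 a b (bval ρ₀ ρ₁ l)))⁻¹
          * fc 𝒞.Φ ω 2 (v3 a b (bval ρ₀ ρ₁ l)) ^ 2 := by
  exact boundary_normal_derivative_vorticity_integral_general 𝒞.isOrthogonalCoord
    (fun q _ => hω.differentiable one_ne_zero (𝒞.Φ q))
    (fun q hq => hdiv _ (𝒞.Φ_mem_closure (hq ▸ bval_mem_Icc 𝒞.ρ₀_lt_ρ₁.le l)))
    (fun q hq => hbc q (hq ▸ bval_eq_or_eq ρ₀ ρ₁ l)) (by fin_cases l <;> norm_num)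

end
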